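/- The upper constant max{1, 1/c} in the comparison of the logarithmic-mean function with T on the unit ball is sharp: for every c > 0 and every ε > 0 there exist distinct points x, y ∈ 𝔹ⁿ such that |x−y|/(|x−y| + 2c·L(1−|x|, 1−|y|)) > (max{1, 1/c} − ε)·T(x,y). -/

import Mathlib

/-- The logarithmic mean of two positive reals. -/
noncomputable def logMean (a b : ℝ) : ℝ :=
  if a = b then a else (a - b) / (Real.log a - Real.log b)

/-!
Put `‖x‖ = 1 - a` and `‖y‖ = 1 - a * exp (2 * t)` with `x` and `y` on the same ray and `t > 0`.
Then `logMean (1 - ‖x‖) (1 - ‖y‖) = ‖x - y‖ / (2 * t)`, so the logarithmic-mean function equals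
`t / (t + c)` for every `a`, while `T x y → tanh t` as `a → 0`. The quotient
`t / ((t + c) * tanh t)` tends to `1` as `t → ∞` and to `1 / c` as `t → 0`, so its supremum over
`t > 0` is at least `max 1 (1 / c)`.
-/

open Filter Topology Real

section Definitions

variable {E : Type*} [NormedAddCommGroup E]

/-- The function `T` of the comparison. On the unit ball of a Euclidean space it is `tanh (ρ / 2)`
for the hyperbolic metric `ρ`; in other normed spaces we keep the same formula. -/
noncomputable def tanhHalfDist (x y : E) : ℝ :=
  dist x y / √(dist x y ^ 2 + (1 - ‖x‖ ^ 2) * (1 - ‖y‖ ^ 2))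

/-- The logarithmic-mean function with parameter `c`, which is compared with `tanhHalfDist` on the
unit ball; `1 - ‖x‖` is the distance from `x` to the boundary. -/
noncomputable def logMeanQuotient (c : ℝ) (x y : E) : ℝ :=
  dist x y / (dist x y + 2 * c * logMean (1 - ‖x‖) (1 - ‖y‖))

end Definitions

theorem logMean_mul_exp {a s : ℝ} (ha : 0 < a) (hs : s ≠ 0) :
    logMean a (a * exp s) = a * (exp s - 1) / s := by
  have hne : a ≠ a * exp s := fun h ↦ hs (exp_eq_one_iff s |>.mp ((left_eq_mul₀ ha.ne').mp h))
  rw [logMean, if_neg hne, log_mul ha.ne' (exp_ne_zero s), log_exp, sub_add_cancel_left,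
    div_neg, ← neg_div]
  ring

theorem tanh_eq_exp_two_mul (t : ℝ) : tanh t = (exp (2 * t) - 1) / (exp (2 * t) + 1) := by
  have h : exp (2 * t) = exp t * exp t := by rw [two_mul, exp_add]
  rw [tanh_eq, exp_neg, h]
  field_simp

theorem hasDerivAt_tanh_zero : HasDerivAt tanh 1 0 := by
  have h := (hasDerivAt_sinh 0).div (hasDerivAt_cosh 0) (cosh_pos 0).ne'
  have htanh : tanh = sinh / cosh := funext tanh_eq_sinh_div_cosh
  simpa [htanh] using h

theorem eventually_mul_tanh_lt_atTop (c : ℝ) {K : ℝ} (hK : K < 1) :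
    ∀ᶠ t in atTop, K * tanh t < t / (t + c) := by
  have hlim : Tendsto (fun t : ℝ ↦ t / (t + c)) atTop (𝓝 1) := by
    have hone_sub : Tendsto (fun t : ℝ ↦ 1 - c / (t + c)) atTop (𝓝 (1 - 0)) :=
      (tendsto_atTop_add_const_right atTop c tendsto_id).const_div_atTop c |>.const_sub 1
    rw [sub_zero] at hone_sub
    refine hone_sub.congr' ?_
    filter_upwards [eventually_gt_atTop (-c)] with t ht
    rw [one_sub_div (by linarith), add_sub_cancel_right]
  filter_upwards [hlim.eventually_const_lt (max_lt hK one_pos), eventually_gt_atTop 0]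
    with t ht ht₀
  have htanh : 0 ≤ tanh t := by
    rw [tanh_eq_sinh_div_cosh]
    exact div_nonneg (sinh_nonneg_iff.mpr ht₀.le) (cosh_pos t).le
  calc K * tanh t ≤ max K 0 * tanh t := by gcongr; exact le_max_left K 0
    _ ≤ max K 0 := mul_le_of_le_one_right (le_max_right K 0) (tanh_lt_one t).le
    _ < t / (t + c) := ht

theorem eventually_mul_tanh_lt_nhdsGT_zero {c K : ℝ} (hc : c ≠ 0) (hK : K < 1 / c) :
    ∀ᶠ t in 𝓝[>] 0, K * tanh t < t / (t + c) := by
  have hderiv : HasDerivAt (fun t ↦ t / (t + c) - K * tanh t) (1 / c - K) 0 := by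
    have hquot : HasDerivAt (fun t ↦ t / (t + c)) (1 / c) 0 := by
      convert! (hasDerivAt_id' (0 : ℝ)).div ((hasDerivAt_id' (0 : ℝ)).add_const c)
        (by simpa using hc) using 1
      rw [zero_add]
      field_simp
      ring
    simpa only [mul_one] using! hquot.sub (hasDerivAt_tanh_zero.const_mul K)
  filter_upwards [hderiv.tendsto_slope_zero_right.eventually_const_lt (sub_pos.mpr hK),
    self_mem_nhdsWithin] with t hslope ht
  have hdiff : 0 < t / (t + c) - K * tanh t := by
    simpa [inv_pos.mpr (Set.mem_Ioi.mp ht)] using hslope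
  exact sub_pos.mp hdiff

theorem exists_pos_mul_tanh_lt {c K : ℝ} (hc : c ≠ 0) (hK : K < max 1 (1 / c)) :
    ∃ t, 0 < t ∧ K * tanh t < t / (t + c) := by
  rcases lt_max_iff.mp hK with hK | hK
  · exact ((eventually_gt_atTop 0).and (eventually_mul_tanh_lt_atTop c hK)).exists
  · exact (eventually_mem_nhdsWithin.and (eventually_mul_tanh_lt_nhdsGT_zero hc hK)).exists

section Radial

variable {E : Type*} [NormedAddCommGroup E] [NormedSpace ℝ E] {u : E}

theorem norm_one_sub_smul (hu : ‖u‖ = 1) {a : ℝ} (ha : a ≤ 1) : ‖(1 - a) • u‖ = 1 - a := by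
  rw [norm_smul_of_nonneg (sub_nonneg.mpr ha), hu, mul_one]

theorem dist_one_sub_smul (hu : ‖u‖ = 1) (a b : ℝ) :
    dist ((1 - a) • u) ((1 - b) • u) = |b - a| := by
  rw [dist_eq_norm, ← sub_smul, norm_smul, hu, mul_one, sub_sub_sub_cancel_left, norm_eq_abs]

theorem dist_one_sub_smul_mul_exp (hu : ‖u‖ = 1) {a s : ℝ} (ha : 0 ≤ a) (hs : 0 ≤ s) :
    dist ((1 - a) • u) ((1 - a * exp s) • u) = a * (exp s - 1) := by
  have hexp : 0 ≤ exp s - 1 := sub_nonneg.mpr (one_le_exp hs)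
  rw [dist_one_sub_smul hu, ← abs_of_nonneg (mul_nonneg ha hexp)]
  ring_nf

theorem logMeanQuotient_one_sub_smul (c : ℝ) (hu : ‖u‖ = 1) {a t : ℝ} (ha : 0 < a) (ht : 0 < t)
    (hat : a * exp (2 * t) ≤ 1) :
    logMeanQuotient c ((1 - a) • u) ((1 - a * exp (2 * t)) • u) = t / (t + c) := by
  have hs : 0 < 2 * t := by positivity
  have ha₁ : a ≤ 1 := (le_mul_of_one_le_right ha.le (one_le_exp hs.le)).trans hat
  have hd : a * (exp (2 * t) - 1) ≠ 0 := (mul_pos ha (sub_pos.mpr (one_lt_exp_iff.mpr hs))).ne'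
  rw [logMeanQuotient, norm_one_sub_smul hu ha₁, norm_one_sub_smul hu hat, sub_sub_cancel,
    sub_sub_cancel, logMean_mul_exp ha hs.ne', dist_one_sub_smul_mul_exp hu ha.le hs.le]
  generalize a * (exp (2 * t) - 1) = d at hd
  calc d / (d + 2 * c * (d / (2 * t))) = (d / t * t) / (d / t * (t + c)) := by
        congr 1 <;> field_simp
    _ = t / (t + c) := mul_div_mul_left t (t + c) (div_ne_zero hd ht.ne')

theorem tanhHalfDist_one_sub_smul (hu : ‖u‖ = 1) {a s : ℝ} (ha : 0 < a) (hs : 0 ≤ s)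
    (has : a * exp s ≤ 1) :
    tanhHalfDist ((1 - a) • u) ((1 - a * exp s) • u) =
      (exp s - 1) / √((exp s - 1) ^ 2 + exp s * (2 - a) * (2 - a * exp s)) := by
  have ha₁ : a ≤ 1 := (le_mul_of_one_le_right ha.le (one_le_exp hs)).trans has
  have hrad : (a * (exp s - 1)) ^ 2 + (1 - (1 - a) ^ 2) * (1 - (1 - a * exp s) ^ 2) =
      a ^ 2 * ((exp s - 1) ^ 2 + exp s * (2 - a) * (2 - a * exp s)) := by ring
  rw [tanhHalfDist, norm_one_sub_smul hu ha₁, norm_one_sub_smul hu has,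
    dist_one_sub_smul_mul_exp hu ha.le hs, hrad, sqrt_mul (sq_nonneg a), sqrt_sq ha.le,
    mul_div_mul_left _ _ ha.ne']

theorem eventually_mul_lt_one (b : ℝ) : ∀ᶠ a in 𝓝[>] 0, a * b < 1 := by
  have hcont : ContinuousAt (fun a ↦ a * b) 0 := by fun_prop
  exact (hcont.eventually_lt_const (by simp)).filter_mono nhdsWithin_le_nhds

theorem tendsto_tanhHalfDist_one_sub_smul (hu : ‖u‖ = 1) {t : ℝ} (ht : 0 ≤ t) :
    Tendsto (fun a ↦ tanhHalfDist ((1 - a) • u) ((1 - a * exp (2 * t)) • u)) (𝓝[>] 0)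
      (𝓝 (tanh t)) := by
  set k := exp (2 * t)
  have : 0 < k := exp_pos _
  have hrad : (k - 1) ^ 2 + k * (2 - 0) * (2 - 0 * k) = (k + 1) ^ 2 := by ring
  have hsqrt : √((k - 1) ^ 2 + k * (2 - 0) * (2 - 0 * k)) = k + 1 := by
    rw [hrad, sqrt_sq (by positivity)]
  have hcont : ContinuousAt (fun a ↦ (k - 1) / √((k - 1) ^ 2 + k * (2 - a) * (2 - a * k))) 0 :=
    continuousAt_const.div (by fun_prop) (by rw [hsqrt]; positivity)
  have hlim := hcont.tendsto
  rw [hsqrt, ← tanh_eq_exp_two_mul] at hlim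
  refine (hlim.mono_left nhdsWithin_le_nhds).congr' ?_
  filter_upwards [self_mem_nhdsWithin, eventually_mul_lt_one k] with a ha hak
  exact (tanhHalfDist_one_sub_smul hu ha (by positivity) hak.le).symm

end Radial

theorem stmt19_general (E : Type*) [NormedAddCommGroup E] [NormedSpace ℝ E] [Nontrivial E]
    {c ε : ℝ} (hc : c ≠ 0) (hε : 0 < ε) :
    ∃ x y : E, ‖x‖ < 1 ∧ ‖y‖ < 1 ∧ x ≠ y ∧
      logMeanQuotient c x y > (max 1 (1 / c) - ε) * tanhHalfDist x y := by
  obtain ⟨u, hu⟩ := exists_norm_eq E zero_le_one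
  obtain ⟨t, ht, hlt⟩ := exists_pos_mul_tanh_lt hc (sub_lt_self (max 1 (1 / c)) hε)
  have hlim := (tendsto_tanhHalfDist_one_sub_smul hu ht.le).const_mul (max 1 (1 / c) - ε)
  obtain ⟨a, ha, hat, hT⟩ := (eventually_mem_nhdsWithin.and
    ((eventually_mul_lt_one (exp (2 * t))).and (hlim.eventually_lt_const hlt))).exists
  have ha₀ : 0 < a := ha
  have hexp : 1 < exp (2 * t) := one_lt_exp_iff.mpr (by positivity)
  have ha₁ : a < 1 := (lt_mul_of_one_lt_right ha₀ hexp).trans hat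
  refine ⟨(1 - a) • u, (1 - a * exp (2 * t)) • u, ?_, ?_, ?_, ?_⟩
  · rw [norm_one_sub_smul hu ha₁.le]
    exact sub_lt_self 1 ha₀
  · rw [norm_one_sub_smul hu hat.le]
    exact sub_lt_self 1 (by positivity)
  · rw [← dist_pos, dist_one_sub_smul_mul_exp hu ha₀.le (by positivity)]
    exact mul_pos ha₀ (sub_pos.mpr hexp)
  · rwa [logMeanQuotient_one_sub_smul c hu ha₀ ht hat.le]

theorem stmt19 (n : ℕ) (hn : 2 ≤ n) (c : ℝ) (hc : 0 < c) (ε : ℝ) (hε : 0 < ε) :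
    ∃ x : EuclideanSpace ℝ (Fin n), ∃ y : EuclideanSpace ℝ (Fin n),
      ‖x‖ < 1 ∧ ‖y‖ < 1 ∧ x ≠ y ∧
        dist x y / (dist x y + 2 * c * logMean (1 - ‖x‖) (1 - ‖y‖)) >
          (max 1 (1 / c) - ε) *
            (dist x y / Real.sqrt (dist x y ^ 2 + (1 - ‖x‖ ^ 2) * (1 - ‖y‖ ^ 2))) := by
  have : NeZero n := ⟨by omega⟩
  exact stmt19_general (EuclideanSpace ℝ (Fin n)) hc.ne' hε
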